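/- Let w be an element of the commutator subgroup [F₂,F₂] of the free group F₂ on two generators, and let g ∈ SL(2,ℂ) with tr(g) ≠ 2 and tr(g) ≠ −2. Suppose (x, y) and (x', y') are pairs in SL(2,ℂ)² with w(x,y) = g and w(x',y') = g, and suppose tr x = tr x', tr y = tr y', and tr(xy) = tr(x'y'). Then there exists z ∈ SL(2,ℂ) commuting with g such that x' = z·x·z⁻¹ and y' = z·y·z⁻¹. (Each fiber of the trace map restricted to the solution variety S_{w,g} is a single orbit of the centralizer of g acting by simultaneous conjugation.) -/

import Mathlib

open Matrix

abbrev SL2C := Matrix.SpecialLinearGroup (Fin 2) ℂ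

noncomputable def tr2 (x : SL2C) : ℂ := Matrix.trace (x : Matrix (Fin 2) (Fin 2) ℂ)

/-- The evaluation of a word `w` in the free group on two generators at a pair
of matrices `x y ∈ SL(2,ℂ)`. -/
noncomputable def wordEval (w : FreeGroup (Fin 2)) (x y : SL2C) : SL2C :=
  FreeGroup.lift ![x, y] w

/-! Over an algebraically closed field, a pair `A, B` of `2 × 2` matrices without a common
eigenvector is determined up to conjugacy by the traces and determinants of `A` and `B` together
with `tr (AB)`: if `A v = μ v` then `v, B v` is a basis, in which `A` and `B` have matrices
depending only on `μ` and these invariants. If `x, y ∈ SL₂` do have a common eigenvector, then every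
`w ∈ [F₂, F₂]` fixes it, because the free group acts on its line through an abelian group; hence
`tr w(x, y) = 2`. Finally, an element conjugating `(x, y)` to `(x', y')` conjugates `w(x, y)` to
`w(x', y')`, so it centralizes `g` when both values are `g`. -/

section FreeGroupAction

variable {α G C X : Type*} [Group G] [MulAction G X] [CommGroup C] [MulAction C X]
  [SMulCommClass G C X] {f : α → G} {c : α → C} {x : X}

theorem freeGroupLift_smul_eq_freeGroupLift_smul (h : ∀ i, f i • x = c i • x) (w : FreeGroup α) :
    FreeGroup.lift f w • x = FreeGroup.lift c w • x := by
  induction w with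
  | C1 => simp only [map_one, one_smul]
  | of i => simpa only [FreeGroup.lift_apply_of] using h i
  | inv_of i ih => rw [map_inv, map_inv, inv_smul_eq_iff, smul_comm, ih, inv_smul_smul]
  | mul u v hu hv => rw [map_mul, map_mul, mul_smul, hv, smul_comm, hu, smul_smul, mul_comm]

theorem freeGroupLift_smul_eq_self_of_mem_commutator (h : ∀ i, f i • x = c i • x) {w : FreeGroup α}
    (hw : w ∈ commutator (FreeGroup α)) : FreeGroup.lift f w • x = x := by
  have hc : FreeGroup.lift c w = 1 := Abelianization.commutator_subset_ker _ hw
  rw [freeGroupLift_smul_eq_freeGroupLift_smul h, hc, one_smul]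

end FreeGroupAction

theorem semiconjBy_freeGroupLift {α G : Type*} [Group G] {f f' : α → G} {z : G}
    (h : ∀ i, SemiconjBy z (f i) (f' i)) (w : FreeGroup α) :
    SemiconjBy z (FreeGroup.lift f w) (FreeGroup.lift f' w) := by
  induction w with
  | C1 => simp only [map_one, SemiconjBy.one_right]
  | of i => simpa only [FreeGroup.lift_apply_of] using h i
  | inv_of i ih => simpa only [map_inv] using ih.inv_right
  | mul u v hu hv => simpa only [map_mul] using hu.mul_right hv

theorem exists_mulVec_eq_smul_iff_isRoot_charpoly {R n : Type*} [CommRing R] [IsDomain R]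
    [Fintype n] [DecidableEq n] {A : Matrix n n R} {μ : R} :
    (∃ v ≠ 0, A *ᵥ v = μ • v) ↔ A.charpoly.IsRoot μ := by
  rw [Polynomial.IsRoot, eval_charpoly, ← exists_mulVec_eq_zero_iff]
  simp only [sub_mulVec, scalar_apply, ← smul_one_eq_diagonal, smul_mulVec, one_mulVec,
    sub_eq_zero, eq_comm]

section FinTwo

variable {R : Type*} [CommRing R]

theorem mul_self_eq_trace_smul_sub_det_smul (A : Matrix (Fin 2) (Fin 2) R) :
    A * A = A.trace • A - A.det • 1 := by
  nontriviality R
  have cayley_hamilton : A * A - A.trace • A + A.det • 1 = 0 := by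
    simpa [charpoly_fin_two, sq, ← Algebra.smul_def, Algebra.algebraMap_eq_smul_one]
      using A.aeval_self_charpoly
  rw [← sub_eq_zero, ← cayley_hamilton]
  abel

/-- The polarization of the Cayley–Hamilton identity `A ^ 2 = (tr A) A - det A`. -/
theorem mul_add_mul_swap_eq (A B : Matrix (Fin 2) (Fin 2) R) :
    A * B + B * A = A.trace • B + B.trace • A + ((A * B).trace - A.trace * B.trace) • 1 := by
  ext i j
  fin_cases i <;> fin_cases j <;>
    simp [mul_apply, Fin.sum_univ_two, trace_fin_two] <;> ring

/-- The Krylov matrix of `B` at `v`, with columns `v` and `B v`; when invertible, it changes the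
standard basis to a cyclic basis for `B`. -/
def krylovMatrix (B : Matrix (Fin 2) (Fin 2) R) (v : Fin 2 → R) : Matrix (Fin 2) (Fin 2) R :=
  (of ![v, B *ᵥ v])ᵀ

theorem semiconjBy_krylovMatrix {A B : Matrix (Fin 2) (Fin 2) R} {v : Fin 2 → R} {a b c d : R}
    (hv : A *ᵥ v = a • v + c • (B *ᵥ v)) (hBv : A *ᵥ (B *ᵥ v) = b • v + d • (B *ᵥ v)) :
    SemiconjBy (krylovMatrix B v) !![a, b; c, d] A := by
  unfold krylovMatrix
  generalize B *ᵥ v = u at hv hBv ⊢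
  ext i j
  fin_cases j
  · simpa [mul_apply, mulVec, dotProduct, mul_comm] using (congrFun hv i).symm
  · simpa [mul_apply, mulVec, dotProduct, mul_comm] using (congrFun hBv i).symm

theorem semiconjBy_krylovMatrix_self (B : Matrix (Fin 2) (Fin 2) R) (v : Fin 2 → R) :
    SemiconjBy (krylovMatrix B v) !![0, -B.det; 1, B.trace] B := by
  have image_Bv : B *ᵥ (B *ᵥ v) = -B.det • v + B.trace • (B *ᵥ v) := by
    rw [mulVec_mulVec, mul_self_eq_trace_smul_sub_det_smul, sub_mulVec, smul_mulVec, smul_mulVec,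
      one_mulVec]
    module
  exact semiconjBy_krylovMatrix (by module) image_Bv

theorem semiconjBy_krylovMatrix_of_mulVec_eq_smul {A : Matrix (Fin 2) (Fin 2) R}
    (B : Matrix (Fin 2) (Fin 2) R) {v : Fin 2 → R} {μ : R} (hv : A *ᵥ v = μ • v) :
    SemiconjBy (krylovMatrix B v)
      !![μ, (A * B).trace - B.trace * (A.trace - μ); 0, A.trace - μ] A := by
  have image_Bv : A *ᵥ (B *ᵥ v) = ((A * B).trace - B.trace * (A.trace - μ)) • v +
      (A.trace - μ) • (B *ᵥ v) := by
    have polarized := congrArg (· *ᵥ v) (mul_add_mul_swap_eq A B)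
    simp only [add_mulVec, ← mulVec_mulVec, hv, smul_mulVec, one_mulVec, mulVec_smul] at polarized
    rw [eq_sub_of_add_eq polarized]
    module
  exact semiconjBy_krylovMatrix (by rw [hv]; module) image_Bv

end FinTwo

section CommonEigenvector

variable {K : Type*} [Field K]

/-- `A` and `B` have a common eigenvector: for `2 × 2` matrices, the pair `(A, B)` acts reducibly
on `K²`. The two eigenvalues may differ. -/
def HasCommonEigenvector {n : Type*} [Fintype n] (A B : Matrix n n K) : Prop :=
  ∃ v ≠ 0, (∃ a : K, A *ᵥ v = a • v) ∧ ∃ b : K, B *ᵥ v = b • v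

theorem isUnit_krylovMatrix {B : Matrix (Fin 2) (Fin 2) K} {v : Fin 2 → K} (hv : v ≠ 0)
    (hB : ∀ b : K, B *ᵥ v ≠ b • v) : IsUnit (krylovMatrix B v) := by
  rw [← linearIndependent_cols_iff_isUnit]
  exact (LinearIndependent.pair_iff' hv).2 fun b => (hB b).symm

theorem exists_isUnit_krylovMatrix {A B : Matrix (Fin 2) (Fin 2) K}
    (h : ¬HasCommonEigenvector A B) {μ : K} (hμ : A.charpoly.IsRoot μ) :
    ∃ v, A *ᵥ v = μ • v ∧ IsUnit (krylovMatrix B v) := by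
  obtain ⟨v, hv, hAv⟩ := exists_mulVec_eq_smul_iff_isRoot_charpoly.2 hμ
  exact ⟨v, hAv, isUnit_krylovMatrix hv fun b hBv => h ⟨v, hv, ⟨μ, hAv⟩, b, hBv⟩⟩

theorem exists_generalLinearGroup_semiconjBy [IsAlgClosed K]
    {A B A' B' : Matrix (Fin 2) (Fin 2) K}
    (h : ¬HasCommonEigenvector A B) (h' : ¬HasCommonEigenvector A' B')
    (trace_A : A.trace = A'.trace) (det_A : A.det = A'.det)
    (trace_B : B.trace = B'.trace) (det_B : B.det = B'.det)
    (trace_AB : (A * B).trace = (A' * B').trace) :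
    ∃ P : GeneralLinearGroup (Fin 2) K,
      SemiconjBy (P : Matrix (Fin 2) (Fin 2) K) A A' ∧
        SemiconjBy (P : Matrix (Fin 2) (Fin 2) K) B B' := by
  obtain ⟨μ, hμ⟩ := IsAlgClosed.exists_root A.charpoly (by simp [charpoly_degree_eq_dim])
  have hμ' : A'.charpoly.IsRoot μ := by
    rwa [charpoly_fin_two, ← trace_A, ← det_A, ← charpoly_fin_two]
  obtain ⟨v, hv, Q, hQ⟩ := exists_isUnit_krylovMatrix h hμ
  obtain ⟨v', hv', Q', hQ'⟩ := exists_isUnit_krylovMatrix h' hμ'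
  have hA := semiconjBy_krylovMatrix_of_mulVec_eq_smul B hv
  have hB := semiconjBy_krylovMatrix_self B v
  have hA' := semiconjBy_krylovMatrix_of_mulVec_eq_smul B' hv'
  have hB' := semiconjBy_krylovMatrix_self B' v'
  rw [← hQ] at hA hB
  rw [← hQ', ← trace_A, ← trace_B, ← trace_AB] at hA'
  rw [← hQ', ← trace_B, ← det_B] at hB'
  exact ⟨Q' * Q⁻¹, hA'.mul_left hA.units_inv_symm_left, hB'.mul_left hB.units_inv_symm_left⟩

theorem exists_units_smul_eq_of_mulVec_eq_smul {n : Type*} [Fintype n] [DecidableEq n]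
    {x : SpecialLinearGroup n K} {v : n → K} (hv : v ≠ 0)
    (h : ∃ a : K, (x : Matrix n n K) *ᵥ v = a • v) : ∃ a : Kˣ, x • v = a • v := by
  obtain ⟨a, ha⟩ := h
  have a_ne_zero : a ≠ 0 := by
    rintro rfl
    exact hv ((smul_eq_zero_iff_eq x).1 (ha.trans (zero_smul K v)))
  exact ⟨Units.mk0 a a_ne_zero, ha⟩

theorem trace_freeGroupLift_eq_two {x y : SpecialLinearGroup (Fin 2) K}
    (h : HasCommonEigenvector (x : Matrix (Fin 2) (Fin 2) K) y) {w : FreeGroup (Fin 2)}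
    (hw : w ∈ commutator (FreeGroup (Fin 2))) :
    (FreeGroup.lift ![x, y] w : Matrix (Fin 2) (Fin 2) K).trace = 2 := by
  obtain ⟨v, hv, hxv, hyv⟩ := h
  obtain ⟨a, ha⟩ := exists_units_smul_eq_of_mulVec_eq_smul hv hxv
  obtain ⟨b, hb⟩ := exists_units_smul_eq_of_mulVec_eq_smul hv hyv
  have fixed : FreeGroup.lift ![x, y] w • v = v :=
    freeGroupLift_smul_eq_self_of_mem_commutator (c := ![a, b]) (Fin.forall_fin_two.2 ⟨ha, hb⟩) hw
  have root : (FreeGroup.lift ![x, y] w : Matrix (Fin 2) (Fin 2) K).charpoly.IsRoot 1 :=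
    exists_mulVec_eq_smul_iff_isRoot_charpoly.1 ⟨v, hv, fixed.trans (one_smul K v).symm⟩
  have root_eq : 1 - (FreeGroup.lift ![x, y] w : Matrix (Fin 2) (Fin 2) K).trace + 1 = 0 := by
    simpa [charpoly_fin_two] using root.eq_zero
  linear_combination -root_eq

theorem exists_specialLinearGroup_eq_smul [IsAlgClosed K] {n : Type*} [Fintype n] [DecidableEq n]
    [Nonempty n] (P : GeneralLinearGroup n K) :
    ∃ (z : SpecialLinearGroup n K) (c : K), (z : Matrix n n K) = c • (P : Matrix n n K) := by
  obtain ⟨c, hc⟩ := IsAlgClosed.exists_pow_nat_eq (P.det : K)⁻¹ (Fintype.card_pos (α := n))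
  refine ⟨⟨c • (P : Matrix n n K), ?_⟩, c, rfl⟩
  rw [det_smul, hc]
  exact inv_mul_cancel₀ P.det.ne_zero

theorem exists_specialLinearGroup_semiconjBy [IsAlgClosed K]
    {x y x' y' : SpecialLinearGroup (Fin 2) K}
    (h : ¬HasCommonEigenvector (x : Matrix (Fin 2) (Fin 2) K) y)
    (h' : ¬HasCommonEigenvector (x' : Matrix (Fin 2) (Fin 2) K) y')
    (trace_x : (x : Matrix (Fin 2) (Fin 2) K).trace = (x' : Matrix (Fin 2) (Fin 2) K).trace)
    (trace_y : (y : Matrix (Fin 2) (Fin 2) K).trace = (y' : Matrix (Fin 2) (Fin 2) K).trace)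
    (trace_xy : (x * y : Matrix (Fin 2) (Fin 2) K).trace =
      (x' * y' : Matrix (Fin 2) (Fin 2) K).trace) :
    ∃ z : SpecialLinearGroup (Fin 2) K, SemiconjBy z x x' ∧ SemiconjBy z y y' := by
  obtain ⟨P, hPx, hPy⟩ := exists_generalLinearGroup_semiconjBy h h'
    trace_x (x.det_coe.trans x'.det_coe.symm) trace_y (y.det_coe.trans y'.det_coe.symm) trace_xy
  obtain ⟨z, c, hz⟩ := exists_specialLinearGroup_eq_smul P
  have rescale {a a' : SpecialLinearGroup (Fin 2) K}
      (ha : SemiconjBy (P : Matrix (Fin 2) (Fin 2) K) a a') : SemiconjBy z a a' := by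
    have hza : SemiconjBy (z : Matrix (Fin 2) (Fin 2) K) a a' := hz ▸ ha.smul_left c
    exact Subtype.ext hza
  exact ⟨z, rescale hPx, rescale hPy⟩

end CommonEigenvector

theorem fiber_is_centralizer_orbit_general {K : Type*} [Field K] [IsAlgClosed K]
    {w : FreeGroup (Fin 2)} (hw : w ∈ commutator (FreeGroup (Fin 2)))
    {g x y x' y' : SpecialLinearGroup (Fin 2) K}
    (hg : (g : Matrix (Fin 2) (Fin 2) K).trace ≠ 2)
    (hxy : FreeGroup.lift ![x, y] w = g) (hxy' : FreeGroup.lift ![x', y'] w = g)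
    (hs : (x : Matrix (Fin 2) (Fin 2) K).trace = (x' : Matrix (Fin 2) (Fin 2) K).trace)
    (ht : (y : Matrix (Fin 2) (Fin 2) K).trace = (y' : Matrix (Fin 2) (Fin 2) K).trace)
    (hu : (x * y : Matrix (Fin 2) (Fin 2) K).trace = (x' * y' : Matrix (Fin 2) (Fin 2) K).trace) :
    ∃ z : SpecialLinearGroup (Fin 2) K, z * g = g * z ∧ x' = z * x * z⁻¹ ∧ y' = z * y * z⁻¹ := by
  have irreducible {a b : SpecialLinearGroup (Fin 2) K} (hab : FreeGroup.lift ![a, b] w = g) :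
      ¬HasCommonEigenvector (a : Matrix (Fin 2) (Fin 2) K) b := fun h =>
    hg (hab ▸ trace_freeGroupLift_eq_two h hw)
  obtain ⟨z, hzx, hzy⟩ :=
    exists_specialLinearGroup_semiconjBy (irreducible hxy) (irreducible hxy') hs ht hu
  have hzg : SemiconjBy z (FreeGroup.lift ![x, y] w) (FreeGroup.lift ![x', y'] w) :=
    semiconjBy_freeGroupLift (Fin.forall_fin_two.2 ⟨hzx, hzy⟩) w
  rw [hxy, hxy'] at hzg
  exact ⟨z, hzg, eq_mul_inv_of_mul_eq hzx.eq.symm, eq_mul_inv_of_mul_eq hzy.eq.symm⟩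

/-- for `w ∈ [F₂,F₂]` and `tr g ≠ ±2`, two solutions of `w(x,y) = g` with
the same traces `(tr x, tr y, tr xy)` are simultaneously conjugate by an element of the
centralizer of `g`. -/
theorem fiber_is_centralizer_orbit (w : FreeGroup (Fin 2))
    (hw : w ∈ commutator (FreeGroup (Fin 2)))
    (g : SL2C) (hg : tr2 g ≠ 2) (hg' : tr2 g ≠ -2)
    (x y x' y' : SL2C)
    (hxy : wordEval w x y = g) (hxy' : wordEval w x' y' = g)
    (hs : tr2 x = tr2 x') (ht : tr2 y = tr2 y') (hu : tr2 (x * y) = tr2 (x' * y')) :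
    ∃ z : SL2C, z * g = g * z ∧ x' = z * x * z⁻¹ ∧ y' = z * y * z⁻¹ :=
  fiber_is_centralizer_orbit_general hw hg hxy hxy' hs ht hu
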